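/- Vekua-type characterization of monogenicity: Let D ⊆ ℝ^{p+2} be a domain invariant under (x_p, r) ↦ (x_p, −r) and let f(x) = F₁(x') + ωF₂(x') ∈ GS¹(Ω_D) ∩ C¹(Ω_D, 𝔸). Then f is left monogenic on Ω_D (D_x f = 0) if and only if the components satisfy, for all x' ∈ D ∖ ℝ^{p+1}: D_{x_p}F₁(x') − ∂_r F₂(x') = ((q−1)/r) F₂(x') and D̄_{x_p}F₂(x') + ∂_r F₁(x') = 0. -/

import Mathlib

open scoped BigOperators
open Filter Topology

namespace GPSM

variable (A : Type*) [NormedAddCommGroup A] [NormedSpace ℝ A] [Mul A] [One A]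

/-- `A` is a real alternative algebra with unit `1`, of finite dimension `d > 1`,
equipped with an anti-involution `conj` (a real-linear map with `(a^c)^c = a`,
`(ab)^c = b^c a^c`, fixing the reals).  The associator is alternating (left/right
alternative laws). -/
structure IsAltStarAlg (conj : A → A) : Prop where
  finDim : FiniteDimensional ℝ A
  one_lt_finrank : 1 < Module.finrank ℝ A
  mul_add' : ∀ a b c : A, a * (b + c) = a * b + a * c
  add_mul' : ∀ a b c : A, (a + b) * c = a * c + b * c
  smul_mul' : ∀ (r : ℝ) (a b : A), (r • a) * b = r • (a * b)
  mul_smul' : ∀ (r : ℝ) (a b : A), a * (r • b) = r • (a * b)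
  one_mul' : ∀ a : A, 1 * a = a
  mul_one' : ∀ a : A, a * 1 = a
  alt_left : ∀ a b : A, a * (a * b) = a * a * b
  alt_right : ∀ a b : A, a * b * b = a * (b * b)
  conj_add : ∀ a b : A, conj (a + b) = conj a + conj b
  conj_smul : ∀ (r : ℝ) (a : A), conj (r • a) = r • conj a
  conj_conj : ∀ a : A, conj (conj a) = a
  conj_mul : ∀ a b : A, conj (a * b) = conj b * conj a
  conj_one : conj 1 = 1

/-- `v 0, v 1, …, v m` is a hypercomplex basis of the hypercomplex subspace
`M = span(v 0, …, v m)` of `A`: `v 0 = 1`, `t(v s) = 0`, `n(v s) = 1`, the `v s`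
anticommute for distinct `s, t ∈ {1,…,m}`, they are linearly independent, and
`M` is contained in the quadratic cone `Q_A`. -/
structure IsHypBasis (conj : A → A) (v : ℕ → A) (m : ℕ) : Prop where
  v_zero : v 0 = 1
  trace_zero : ∀ s, 1 ≤ s → s ≤ m → v s + conj (v s) = 0
  norm_one : ∀ s, 1 ≤ s → s ≤ m → v s * conj (v s) = 1
  anticomm : ∀ s t, 1 ≤ s → s ≤ m → 1 ≤ t → t ≤ m → s ≠ t → v s * v t = -(v t * v s)
  indep : LinearIndependent ℝ (fun i : Fin (m + 1) => v i)
  mem_cone : ∀ x ∈ Submodule.span ℝ (Set.range fun i : Fin (m + 1) => v (i : ℕ)),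
      ∃ tr nr : ℝ, x + conj x = tr • (1 : A) ∧ x * conj x = nr • (1 : A) ∧
        ((∃ r : ℝ, x = r • (1 : A)) ∨ tr ^ 2 < 4 * nr)

variable {A}

/-- Identification of `ℝ^{m+1}` with the hypercomplex subspace `M`:
`(x_0,…,x_m) ↦ Σ x_s • v s`. -/
def emb (v : ℕ → A) (m : ℕ) (x : Fin (m + 1) → ℝ) : A :=
  ∑ s : Fin (m + 1), x s • v (s : ℕ)

/-- First `p+1` coordinates of a point of `M ≅ ℝ^{m+1}`, i.e. the `x_p`-part. -/
def projP (m p : ℕ) (x : Fin (m + 1) → ℝ) : Fin (p + 1) → ℝ := fun s =>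
  if h : (s : ℕ) < m + 1 then x ⟨(s : ℕ), h⟩ else 0

/-- Inclusion `ℝ^{p+1} ⊆ ℝ^{m+1}` (remaining coordinates `0`). -/
def injP (m p : ℕ) (y : Fin (p + 1) → ℝ) : Fin (m + 1) → ℝ := fun s =>
  if h : (s : ℕ) < p + 1 then y ⟨(s : ℕ), h⟩ else 0

/-- The coordinates of `x_q` (last `q = m - p` coordinates of `x`). -/
def xqpart (m p : ℕ) (x : Fin (m + 1) → ℝ) : Fin (m + 1) → ℝ := fun s =>
  if (s : ℕ) ≤ p then 0 else x s

/-- The coordinates of `x_p` inside `ℝ^{m+1}`. -/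
def xppart (m p : ℕ) (x : Fin (m + 1) → ℝ) : Fin (m + 1) → ℝ := fun s =>
  if (s : ℕ) ≤ p then x s else 0

/-- `r = |x_q|`. -/
noncomputable def rad (m p : ℕ) (x : Fin (m + 1) → ℝ) : ℝ :=
  Real.sqrt (∑ s : Fin (m + 1), (xqpart m p x s) ^ 2)

/-- `ω = x_q / |x_q|` (coordinates), `0` when `x_q = 0`. -/
noncomputable def normq (m p : ℕ) (x : Fin (m + 1) → ℝ) : Fin (m + 1) → ℝ :=
  (rad m p x)⁻¹ • xqpart m p x

/-- The reflection `x = x_p + x_q ↦ x_⋄ = x_p - x_q`. -/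
def reflP (m p : ℕ) (x : Fin (m + 1) → ℝ) : Fin (m + 1) → ℝ := fun s =>
  if (s : ℕ) ≤ p then x s else -x s

/-- The sphere `𝕊 = {x_q ∈ span(v_{p+1},…,v_m) : x_q² = -1}`, in coordinates. -/
def Sph (v : ℕ → A) (m p : ℕ) : Set (Fin (m + 1) → ℝ) :=
  {w | (∀ s : Fin (m + 1), (s : ℕ) ≤ p → w s = 0) ∧ emb v m w * emb v m w = -1}

/-- The point `x_p + r ω` of `M ≅ ℝ^{m+1}`. -/
def pt (m p : ℕ) (w : Fin (m + 1) → ℝ) (y : Fin (p + 1) → ℝ) (r : ℝ) :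
    Fin (m + 1) → ℝ :=
  injP m p y + r • w

/-- The slice `Ω_ω ⊆ ℝ^{p+2}` of `Ω` at `ω`. -/
def sliceSet (m p : ℕ) (Ω : Set (Fin (m + 1) → ℝ)) (w : Fin (m + 1) → ℝ) :
    Set ((Fin (p + 1) → ℝ) × ℝ) := {z | pt m p w z.1 z.2 ∈ Ω}

/-- The restriction `f_ω` of `f` to the slice at `ω`, as a function on `ℝ^{p+2}`. -/
def sliceFun (m p : ℕ) (f : (Fin (m + 1) → ℝ) → A) (w : Fin (m + 1) → ℝ) :
    (Fin (p + 1) → ℝ) × ℝ → A := fun z => f (pt m p w z.1 z.2)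

/-- Partial derivative `∂_{x_s}` of a function on `ℝ^{m+1}`. -/
noncomputable def pdF (m : ℕ) (s : Fin (m + 1)) (f : (Fin (m + 1) → ℝ) → A)
    (x : Fin (m + 1) → ℝ) : A := fderiv ℝ f x (Pi.single s 1)

/-- Partial derivative `∂_{x_s}` of a function on `ℝ^{p+1}`. -/
noncomputable def pdP (p : ℕ) (s : Fin (p + 1)) (g : (Fin (p + 1) → ℝ) → A)
    (y : Fin (p + 1) → ℝ) : A := fderiv ℝ g y (Pi.single s 1)

/-- Partial derivative `∂_{x_s}` of a function on `ℝ^{p+2} = ℝ^{p+1} × ℝ`. -/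
noncomputable def pdSx (p : ℕ) (s : Fin (p + 1)) (G : (Fin (p + 1) → ℝ) × ℝ → A)
    (z : (Fin (p + 1) → ℝ) × ℝ) : A := fderiv ℝ G z (Pi.single s 1, 0)

/-- Partial derivative `∂_r` of a function on `ℝ^{p+2} = ℝ^{p+1} × ℝ`. -/
noncomputable def pdSr (p : ℕ) (G : (Fin (p + 1) → ℝ) × ℝ → A)
    (z : (Fin (p + 1) → ℝ) × ℝ) : A := fderiv ℝ G z (0, 1)

/-- Second partial derivative `∂_r²`. -/
noncomputable def pdSr2 (p : ℕ) (G : (Fin (p + 1) → ℝ) × ℝ → A)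
    (z : (Fin (p + 1) → ℝ) × ℝ) : A := pdSr p (pdSr p G) z

/-- The operator `Σ_{lo ≤ s ≤ hi} v_s ∂_{x_s}` on functions on `ℝ^{m+1}`.
`Dop v m 0 p` is `D_{x_p}`, `Dop v m (p+1) m` is `D_{x_q}`, `Dop v m 0 m` is `D_x`. -/
noncomputable def Dop (v : ℕ → A) (m lo hi : ℕ) (f : (Fin (m + 1) → ℝ) → A)
    (x : Fin (m + 1) → ℝ) : A :=
  ∑ s : Fin (m + 1), if lo ≤ (s : ℕ) ∧ (s : ℕ) ≤ hi then v (s : ℕ) * pdF m s f x else 0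

/-- The conjugate operator `∂_{x_0} - Σ_{1 ≤ s ≤ hi} v_s ∂_{x_s}` on functions on
`ℝ^{m+1}`; `Dbarop v m p` is `D̄_{x_p}`, `Dbarop v m m` is `D̄_x`. -/
noncomputable def Dbarop (v : ℕ → A) (m hi : ℕ) (f : (Fin (m + 1) → ℝ) → A)
    (x : Fin (m + 1) → ℝ) : A :=
  pdF m 0 f x -
    ∑ s : Fin (m + 1), if 1 ≤ (s : ℕ) ∧ (s : ℕ) ≤ hi then v (s : ℕ) * pdF m s f x else 0

/-- The operator `D_{x_p} = Σ_{s=0}^p v_s ∂_{x_s}` on functions on `ℝ^{p+1}`. -/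
noncomputable def DopP (v : ℕ → A) (p : ℕ) (g : (Fin (p + 1) → ℝ) → A)
    (y : Fin (p + 1) → ℝ) : A :=
  ∑ s : Fin (p + 1), v (s : ℕ) * pdP p s g y

/-- The operator `D̄_{x_p} = ∂_{x_0} - Σ_{s=1}^p v_s ∂_{x_s}` on functions on `ℝ^{p+1}`. -/
noncomputable def DbaropP (v : ℕ → A) (p : ℕ) (g : (Fin (p + 1) → ℝ) → A)
    (y : Fin (p + 1) → ℝ) : A :=
  pdP p 0 g y - ∑ s : Fin (p + 1), if 1 ≤ (s : ℕ) then v (s : ℕ) * pdP p s g y else 0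

/-- The operator `D_{x_p}` on functions on `ℝ^{p+2} = ℝ^{p+1} × ℝ`. -/
noncomputable def DopSx (v : ℕ → A) (p : ℕ) (G : (Fin (p + 1) → ℝ) × ℝ → A)
    (z : (Fin (p + 1) → ℝ) × ℝ) : A :=
  ∑ s : Fin (p + 1), v (s : ℕ) * pdSx p s G z

/-- The operator `D̄_{x_p}` on functions on `ℝ^{p+2} = ℝ^{p+1} × ℝ`. -/
noncomputable def DbaropSx (v : ℕ → A) (p : ℕ) (G : (Fin (p + 1) → ℝ) × ℝ → A)
    (z : (Fin (p + 1) → ℝ) × ℝ) : A :=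
  pdSx p 0 G z - ∑ s : Fin (p + 1), if 1 ≤ (s : ℕ) then v (s : ℕ) * pdSx p s G z else 0

/-- The Laplacian `Δ_x` on functions on `ℝ^{m+1}`. -/
noncomputable def lapF (m : ℕ) (f : (Fin (m + 1) → ℝ) → A)
    (x : Fin (m + 1) → ℝ) : A :=
  ∑ s : Fin (m + 1), pdF m s (pdF m s f) x

/-- The Laplacian `Δ_{x_p}` on functions on `ℝ^{p+1}`. -/
noncomputable def lapP (p : ℕ) (g : (Fin (p + 1) → ℝ) → A)
    (y : Fin (p + 1) → ℝ) : A :=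
  ∑ s : Fin (p + 1), pdP p s (pdP p s g) y

/-- Iterated Laplacian `Δ_x^k`. -/
noncomputable def lapIterF (m k : ℕ) (f : (Fin (m + 1) → ℝ) → A) :
    (Fin (m + 1) → ℝ) → A :=
  (fun g => lapF m g)^[k] f

/-- Iterated Laplacian `Δ_{x_p}^k`. -/
noncomputable def lapIterP (p k : ℕ) (g : (Fin (p + 1) → ℝ) → A) :
    (Fin (p + 1) → ℝ) → A :=
  (fun h => lapP p h)^[k] g

/-- The Laplacian `Δ_{x'} = Δ_{x_p} + ∂_r²` on functions on `ℝ^{p+2}`. -/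
noncomputable def lapSx (p : ℕ) (G : (Fin (p + 1) → ℝ) × ℝ → A)
    (z : (Fin (p + 1) → ℝ) × ℝ) : A :=
  (∑ s : Fin (p + 1), pdSx p s (pdSx p s G) z) + pdSr2 p G z

/-- The slice Cauchy-Riemann operator `D_ω = D_{x_p} + ω ∂_r` applied to a function
on `ℝ^{p+2}`, where `ω` is given in coordinates by `w`. -/
noncomputable def DomCR (v : ℕ → A) (m p : ℕ) (w : Fin (m + 1) → ℝ)
    (G : (Fin (p + 1) → ℝ) × ℝ → A) (z : (Fin (p + 1) → ℝ) × ℝ) : A :=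
  DopSx v p G z + emb v m w * pdSr p G z

/-- `f` is left generalized partial-slice monogenic (of type `(p, m-p)`) on `Ω`. -/
def GSM (v : ℕ → A) (m p : ℕ) (f : (Fin (m + 1) → ℝ) → A)
    (Ω : Set (Fin (m + 1) → ℝ)) : Prop :=
  ∀ w ∈ Sph v m p, ContDiffOn ℝ 1 (sliceFun m p f w) (sliceSet m p Ω w) ∧
    ∀ z ∈ sliceSet m p Ω w, DomCR v m p w (sliceFun m p f w) z = 0

/-- `Ω` is partially symmetric with respect to `ℝ^{p+1}`. -/
def PSym (v : ℕ → A) (m p : ℕ) (Ω : Set (Fin (m + 1) → ℝ)) : Prop :=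
  ∀ x ∈ Ω, ∀ w ∈ Sph v m p, xppart m p x + rad m p x • w ∈ Ω

/-- `Ω` is a slice domain: a domain meeting `ℝ^{p+1}` all of whose slices are
domains in `ℝ^{p+2}`. -/
def SliceDomain (v : ℕ → A) (m p : ℕ) (Ω : Set (Fin (m + 1) → ℝ)) : Prop :=
  IsOpen Ω ∧ IsConnected Ω ∧ (∃ x ∈ Ω, xqpart m p x = 0) ∧
    ∀ w ∈ Sph v m p, IsConnected (sliceSet m p Ω w)

/-- The reflection `(x_p, r) ↦ (x_p, -r)` of `ℝ^{p+2}`. -/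
def reflD (p : ℕ) (z : (Fin (p + 1) → ℝ) × ℝ) : (Fin (p + 1) → ℝ) × ℝ := (z.1, -z.2)

/-- The p-symmetric completion `Ω_D ⊆ M` of `D ⊆ ℝ^{p+2}`. -/
def OmegaD (v : ℕ → A) (m p : ℕ) (D : Set ((Fin (p + 1) → ℝ) × ℝ)) :
    Set (Fin (m + 1) → ℝ) :=
  {x | ∃ w ∈ Sph v m p, ∃ z ∈ D, x = pt m p w z.1 z.2}

/-- `(F₁, F₂)` satisfies the even-odd (stem function) conditions on `D`. -/
def IsStem (p : ℕ) (D : Set ((Fin (p + 1) → ℝ) × ℝ))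
    (F₁ F₂ : (Fin (p + 1) → ℝ) × ℝ → A) : Prop :=
  ∀ z ∈ D, F₁ (reflD p z) = F₁ z ∧ F₂ (reflD p z) = -F₂ z

/-- `f` is the generalized partial-slice function induced by the stem `(F₁, F₂)`:
`f(x_p + rω) = F₁(x_p, r) + ω F₂(x_p, r)`. -/
def Induced (v : ℕ → A) (m p : ℕ) (D : Set ((Fin (p + 1) → ℝ) × ℝ))
    (F₁ F₂ : (Fin (p + 1) → ℝ) × ℝ → A) (f : (Fin (m + 1) → ℝ) → A) : Prop :=
  ∀ w ∈ Sph v m p, ∀ z ∈ D, f (pt m p w z.1 z.2) = F₁ z + emb v m w * F₂ z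

/-- The generalized Cauchy-Riemann system for the stem `(F₁, F₂)` on `D`. -/
def StemCR (v : ℕ → A) (p : ℕ) (D : Set ((Fin (p + 1) → ℝ) × ℝ))
    (F₁ F₂ : (Fin (p + 1) → ℝ) × ℝ → A) : Prop :=
  ∀ z ∈ D, DopSx v p F₁ z - pdSr p F₂ z = 0 ∧ DbaropSx v p F₂ z + pdSr p F₁ z = 0

/-- `f` is generalized partial-slice regular on `Ω_D`. -/
def MemGSR (v : ℕ → A) (m p : ℕ) (D : Set ((Fin (p + 1) → ℝ) × ℝ))
    (f : (Fin (m + 1) → ℝ) → A) : Prop :=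
  ∃ F₁ F₂ : (Fin (p + 1) → ℝ) × ℝ → A, IsStem p D F₁ F₂ ∧
    ContDiffOn ℝ 1 F₁ D ∧ ContDiffOn ℝ 1 F₂ D ∧
    Induced v m p D F₁ F₂ f ∧ StemCR v p D F₁ F₂

/-- `f` is a generalized partial-slice function on `Ω`. -/
def MemGS (v : ℕ → A) (m p : ℕ) (Ω : Set (Fin (m + 1) → ℝ))
    (f : (Fin (m + 1) → ℝ) → A) : Prop :=
  ∃ F₁ F₂ : (Fin (p + 1) → ℝ) × ℝ → A,
    (∀ z : (Fin (p + 1) → ℝ) × ℝ, F₁ (reflD p z) = F₁ z ∧ F₂ (reflD p z) = -F₂ z) ∧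
    ∀ x ∈ Ω, f x = F₁ (projP m p x, rad m p x) +
      emb v m (normq m p x) * F₂ (projP m p x, rad m p x)

/-- Non-associative power: `a^n` with products taken from the right. -/
def apow (a : A) (n : ℕ) : A := (fun b => a * b)^[n] 1

/-- Partial even part `PE[f](x) = (f(x) + f(x_⋄))/2`. -/
noncomputable def PE (m p : ℕ) (f : (Fin (m + 1) → ℝ) → A)
    (x : Fin (m + 1) → ℝ) : A := (2 : ℝ)⁻¹ • (f x + f (reflP m p x))

/-- Partial odd part `PO[f](x) = (f(x) - f(x_⋄))/2`. -/
noncomputable def PO (m p : ℕ) (f : (Fin (m + 1) → ℝ) → A)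
    (x : Fin (m + 1) → ℝ) : A := (2 : ℝ)⁻¹ • (f x - f (reflP m p x))

/-- `Ω₀* = {x_p + x_q : x_p ∈ Ω₀, x_q ∈ ℝ^q}`. -/
def Omega0star (m p : ℕ) (Ω₀ : Set (Fin (p + 1) → ℝ)) : Set (Fin (m + 1) → ℝ) :=
  {x | projP m p x ∈ Ω₀}

/-- The spherical derivative `f'_s(x) = (1/2) x_q⁻¹ (f(x) - f(x_⋄))`
(using `x_q⁻¹ = -x_q/|x_q|²`). -/
noncomputable def sder (v : ℕ → A) (m p : ℕ) (f : (Fin (m + 1) → ℝ) → A)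
    (x : Fin (m + 1) → ℝ) : A :=
  -(((2 : ℝ) * rad m p x ^ 2)⁻¹) • (emb v m (xqpart m p x) * (f x - f (reflP m p x)))

/-- The spherical Dirac operator
`Γ f = -(1/2) Σ_{p+1 ≤ i,j ≤ m} v_i (v_j (L_{ij} f))`. -/
noncomputable def sphericalGamma (v : ℕ → A) (m p : ℕ) (f : (Fin (m + 1) → ℝ) → A)
    (x : Fin (m + 1) → ℝ) : A :=
  -((2 : ℝ)⁻¹) • ∑ i : Fin (m + 1), ∑ j : Fin (m + 1),
    if p < (i : ℕ) ∧ p < (j : ℕ) then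
      v (i : ℕ) * (v (j : ℕ) * (x i • pdF m j f x - x j • pdF m i f x)) else 0

/-- The slice Cauchy-Riemann operator `D_ω` applied to (the slice restriction of) a
function `f` on `M`, at the point `x` (with `ω = x_q/|x_q|`). -/
noncomputable def DomCRat (v : ℕ → A) (m p : ℕ) (f : (Fin (m + 1) → ℝ) → A)
    (x : Fin (m + 1) → ℝ) : A :=
  DomCR v m p (normq m p x) (sliceFun m p f (normq m p x)) (projP m p x, rad m p x)

/-- `f` is left monogenic on `Ω`: `f ∈ C¹` and `D_x f = 0`. -/
def Monogenic (v : ℕ → A) (m : ℕ) (f : (Fin (m + 1) → ℝ) → A)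
    (Ω : Set (Fin (m + 1) → ℝ)) : Prop :=
  ContDiffOn ℝ 1 f Ω ∧ ∀ x ∈ Ω, Dop v m 0 m f x = 0

/-- `f` is harmonic on `Ω`: `f ∈ C²` and `Δ_x f = 0`. -/
def Harmonic (m : ℕ) (f : (Fin (m + 1) → ℝ) → A)
    (Ω : Set (Fin (m + 1) → ℝ)) : Prop :=
  ContDiffOn ℝ 2 f Ω ∧ ∀ x ∈ Ω, lapF m f x = 0

/-- A family of functions converges normally (locally a summable uniform bound). -/
def NormallyConvOn {E F : Type*} [TopologicalSpace E] [NormedAddCommGroup F]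
    (u : ℕ → E → F) (s : Set E) : Prop :=
  ∀ x ∈ s, ∃ U ∈ nhds x, ∃ c : ℕ → ℝ, Summable c ∧ ∀ k : ℕ, ∀ y ∈ U, ‖u k y‖ ≤ c k

/-- The generalized partial-slice CK-extension
`CK[f₀](x) = Σ_k (r^{2k}/(2k)!)(-Δ_{x_p})^k f₀(x_p)
  + ω Σ_k (r^{2k+1}/(2k+1)!)(-Δ_{x_p})^k (D_{x_p} f₀)(x_p)`. -/
noncomputable def CKe (v : ℕ → A) (m p : ℕ) (f₀ : (Fin (p + 1) → ℝ) → A)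
    (x : Fin (m + 1) → ℝ) : A :=
  (∑' k : ℕ, (((-1 : ℝ) ^ k * rad m p x ^ (2 * k)) / (2 * k).factorial) •
      lapIterP p k f₀ (projP m p x)) +
  emb v m (normq m p x) *
    ∑' k : ℕ, (((-1 : ℝ) ^ k * rad m p x ^ (2 * k + 1)) / (2 * k + 1).factorial) •
      lapIterP p k (DopP v p f₀) (projP m p x)

/-- The coefficient `Γ(q/2)(-1)^k r^{2k} / (2^{2k} k! Γ(k + q/2))`. -/
noncomputable def hgckC (q k : ℕ) (r : ℝ) : ℝ :=
  (Real.Gamma ((q : ℝ) / 2) * (-1) ^ k * r ^ (2 * k)) /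
    (2 ^ (2 * k) * (k.factorial : ℝ) * Real.Gamma ((k : ℝ) + (q : ℝ) / 2))

/-- The coefficient `Γ(q/2)(-1)^k r^{2k} / (2^{2k+1} k! Γ(k + q/2 + 1))`. -/
noncomputable def gckC' (q k : ℕ) (r : ℝ) : ℝ :=
  (Real.Gamma ((q : ℝ) / 2) * (-1) ^ k * r ^ (2 * k)) /
    (2 ^ (2 * k + 1) * (k.factorial : ℝ) * Real.Gamma ((k : ℝ) + (q : ℝ) / 2 + 1))

/-- The coefficient `Γ(q/2 + 1)(-1)^k r^{2k} / (2^{2k} k! Γ(k + q/2 + 1))`. -/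
noncomputable def hgckC' (q k : ℕ) (r : ℝ) : ℝ :=
  (Real.Gamma ((q : ℝ) / 2 + 1) * (-1) ^ k * r ^ (2 * k)) /
    (2 ^ (2 * k) * (k.factorial : ℝ) * Real.Gamma ((k : ℝ) + (q : ℝ) / 2 + 1))

/-- The monogenic generalized CK-extension `GCK[A₀]`. -/
noncomputable def GCKe (v : ℕ → A) (m p : ℕ) (A₀ : (Fin (p + 1) → ℝ) → A)
    (x : Fin (m + 1) → ℝ) : A :=
  (∑' k : ℕ, hgckC (m - p) k (rad m p x) • lapIterP p k A₀ (projP m p x)) +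
  emb v m (xqpart m p x) *
    ∑' k : ℕ, gckC' (m - p) k (rad m p x) • lapIterP p k (DopP v p A₀) (projP m p x)

/-- The harmonic generalized CK-extension `HGCK[A₀, A₁]`. -/
noncomputable def HGCKe (v : ℕ → A) (m p : ℕ) (A₀ A₁ : (Fin (p + 1) → ℝ) → A)
    (x : Fin (m + 1) → ℝ) : A :=
  (∑' k : ℕ, hgckC (m - p) k (rad m p x) • lapIterP p k A₀ (projP m p x)) +
  emb v m (xqpart m p x) *
    ∑' k : ℕ, hgckC' (m - p) k (rad m p x) • lapIterP p k A₁ (projP m p x)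

/-- The operator `(1/r)∂_r`, extended to `r = 0` by its limit `∂_r²` (on even
functions). -/
noncomputable def T1 (p : ℕ) (G : (Fin (p + 1) → ℝ) × ℝ → A) :
    (Fin (p + 1) → ℝ) × ℝ → A := fun z =>
  if z.2 = 0 then pdSr2 p G z else (z.2)⁻¹ • pdSr p G z

/-- The operator `∂_r ∘ (1/r)`, extended to `r = 0` by its limit `(1/2)∂_r²` (on odd
functions). -/
noncomputable def T2 (p : ℕ) (G : (Fin (p + 1) → ℝ) × ℝ → A) :
    (Fin (p + 1) → ℝ) × ℝ → A := fun z =>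
  if z.2 = 0 then (2 : ℝ)⁻¹ • pdSr2 p G z
  else fderiv ℝ (fun t : ℝ => t⁻¹ • G (z.1, t)) z.2 1

/-- `C_q(k) = (q-1)(q-3)⋯(q-2k+1)`, `C_q(0) = 1`. -/
noncomputable def cq (q k : ℕ) : ℝ :=
  ∏ i ∈ Finset.range k, ((q : ℝ) - (2 * (i : ℝ) + 1))

/-- Double factorial. -/
def dfac : ℕ → ℕ
  | 0 => 1
  | 1 => 1
  | n + 2 => (n + 2) * dfac n

/-- The Fueter-Sce constant `γ_q = (-1)^{(q-1)/2} (q-1)!!/(q-2)!!`. -/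
noncomputable def gammaQ (q : ℕ) : ℝ :=
  (-1 : ℝ) ^ ((q - 1) / 2) * (dfac (q - 1) : ℝ) / (dfac (q - 2) : ℝ)


/-- Multiplication as a bilinear map. -/
noncomputable def mulB {conj : A → A} (H : IsAltStarAlg A conj) : A →ₗ[ℝ] A →ₗ[ℝ] A :=
  LinearMap.mk₂ ℝ (fun a b => a * b) H.add_mul' H.smul_mul' H.mul_add' H.mul_smul'

theorem mulB_apply {conj : A → A} (H : IsAltStarAlg A conj) (a b : A) :
    mulB H a b = a * b := rfl

/-- Coordinates to the hypercomplex subspace, as a linear map. -/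
noncomputable def embL (v : ℕ → A) (m : ℕ) : (Fin (m + 1) → ℝ) →ₗ[ℝ] A :=
  ∑ s : Fin (m + 1), (LinearMap.proj s).smulRight (v (s : ℕ))

theorem embL_apply (v : ℕ → A) (m : ℕ) (x : Fin (m + 1) → ℝ) :
    embL v m x = emb v m x := by
  simp [embL, emb, LinearMap.sum_apply]

theorem vmul {conj : A → A} (H : IsAltStarAlg A conj) {v : ℕ → A} {m : ℕ}
    (hv : IsHypBasis A conj v m) (s t : ℕ) (hs : 1 ≤ s) (hs' : s ≤ m) (ht : 1 ≤ t)
    (ht' : t ≤ m) : v s * v t + v t * v s = if s = t then (-2 : ℝ) • (1 : A) else 0 := by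
  split_ifs with h
  · subst h
    have h1 := hv.trace_zero s hs hs'
    have h2 := hv.norm_one s hs hs'
    have h3 : conj (v s) = (-1 : ℝ) • v s := by
      rw [neg_one_smul]; exact (neg_eq_of_add_eq_zero_right h1).symm
    rw [h3, H.mul_smul'] at h2
    have h4 : v s * v s = (-1 : ℝ) • (1 : A) := by rw [← h2, smul_smul]; simp
    rw [h4, ← add_smul]; norm_num
  · rw [hv.anticomm s t hs hs' ht ht' h]; simp

theorem vsq {conj : A → A} (H : IsAltStarAlg A conj) {v : ℕ → A} {m : ℕ}
    (hv : IsHypBasis A conj v m) (s : ℕ) (hs : 1 ≤ s) (hs' : s ≤ m) :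
    v s * v s = -1 := by
  have h1 := vmul H hv s s hs hs' hs hs'
  rw [if_pos rfl, ← two_smul ℝ] at h1
  have := congrArg (fun a => (2 : ℝ)⁻¹ • a) h1
  simp only [smul_smul] at this
  norm_num at this
  exact this

theorem lin_alt {conj : A → A} (H : IsAltStarAlg A conj) (a b c : A) :
    a * (b * c) + b * (a * c) = (a * b + b * a) * c := by
  have h := H.alt_left (a + b) c
  simp only [H.add_mul', H.mul_add', H.alt_left] at h
  rw [H.add_mul']
  have h2 : a * (b * c) + b * (a * c) = 
     (a * a * c + a * (b * c) + (b * (a * c) + b * b * c)) - a * a * c - b * b * c := by abel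
  rw [h2, h]; abel

theorem anti_v_emb {conj : A → A} (H : IsAltStarAlg A conj) {v : ℕ → A} {m p : ℕ}
    (hv : IsHypBasis A conj v m) (s : ℕ) (hs : 1 ≤ s) (hsp : s ≤ p) (hp : p < m)
    (w : Fin (m + 1) → ℝ) (hw : ∀ s : Fin (m + 1), (s : ℕ) ≤ p → w s = 0) :
    v s * emb v m w + emb v m w * v s = 0 := by
  rw [← mulB_apply H, ← mulB_apply H]
  simp only [emb, map_sum, map_smul, LinearMap.sum_apply, LinearMap.smul_apply]
  rw [← Finset.sum_add_distrib]
  apply Finset.sum_eq_zero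
  intro t _
  by_cases ht : (t : ℕ) ≤ p
  · simp [hw t ht]
  · rw [← smul_add, mulB_apply, mulB_apply,
      vmul H hv s t hs (by omega) (by omega) (by omega), if_neg (by omega), smul_zero]

theorem emb_sq {conj : A → A} (H : IsAltStarAlg A conj) {v : ℕ → A} {m p : ℕ}
    (hv : IsHypBasis A conj v m)
    (w : Fin (m + 1) → ℝ) (hw : ∀ s : Fin (m + 1), (s : ℕ) ≤ p → w s = 0) :
    emb v m w * emb v m w = (-∑ s, w s ^ 2) • (1 : A) := by
  have key : emb v m w * emb v m w = ∑ s, ∑ t, (w s * w t) • (v (s : ℕ) * v (t : ℕ)) := by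
    rw [← mulB_apply H]
    simp only [emb, map_sum, map_smul, LinearMap.sum_apply, LinearMap.smul_apply, mulB_apply,
      Finset.smul_sum, smul_smul]
    rw [Finset.sum_comm]
    refine Finset.sum_congr rfl fun s _ => Finset.sum_congr rfl fun t _ => ?_
    rw [mul_comm]
  have key2 : emb v m w * emb v m w = ∑ s, ∑ t, (w s * w t) • (v (t : ℕ) * v (s : ℕ)) := by
    rw [key, Finset.sum_comm]
    refine Finset.sum_congr rfl fun s _ => Finset.sum_congr rfl fun t _ => ?_
    rw [mul_comm]
  have h2 : (2 : ℝ) • (emb v m w * emb v m w) = (2 : ℝ) • ((-∑ s, w s ^ 2) • (1 : A)) := by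
    rw [two_smul]
    nth_rewrite 1 [key]
    rw [key2, ← Finset.sum_add_distrib, smul_smul, mul_neg, Finset.mul_sum,
      ← Finset.sum_neg_distrib, Finset.sum_smul]
    refine Finset.sum_congr rfl fun s _ => ?_
    rw [← Finset.sum_add_distrib, Finset.sum_eq_single s]
    · by_cases hs : (s : ℕ) ≤ p
      · simp [hw s hs]
      · rw [← smul_add, vmul H hv s s (by omega) (by omega) (by omega) (by omega), if_pos rfl,
          smul_smul]
        congr 1; ring
    · intro t _ hts
      by_cases hs : (s : ℕ) ≤ p
      · simp [hw s hs]
      by_cases ht : (t : ℕ) ≤ p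
      · simp [hw t ht]
      rw [← smul_add, vmul H hv s t (by omega) (by omega) (by omega) (by omega), if_neg, smul_zero]
      intro h; exact hts (Fin.ext h.symm)
    · simp
  have h3 := congrArg (fun a => (2 : ℝ)⁻¹ • a) h2
  simp only [smul_smul] at h3
  norm_num at h3
  simpa using h3

theorem one_ne {conj : A → A} {v : ℕ → A} {m : ℕ}
    (hv : IsHypBasis A conj v m) : (1 : A) ≠ 0 := by
  have := hv.indep.ne_zero (0 : Fin (m + 1))
  simpa [hv.v_zero] using this

theorem mem_Sph {conj : A → A} (H : IsAltStarAlg A conj) {v : ℕ → A} {m p : ℕ}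
    (hv : IsHypBasis A conj v m) (w : Fin (m + 1) → ℝ) :
    w ∈ Sph v m p ↔ (∀ s : Fin (m + 1), (s : ℕ) ≤ p → w s = 0) ∧ ∑ s, w s ^ 2 = 1 := by
  refine and_congr_right fun hw => ?_
  rw [emb_sq H hv w hw]
  constructor
  · intro h
    have h1 : (1 - ∑ s, w s ^ 2) • (1 : A) = 0 := by
      rw [sub_eq_add_neg, add_smul, h]; simp
    rcases smul_eq_zero.1 h1 with h | h
    · linarith
    · exact absurd h (one_ne hv)
  · intro h; rw [h]; simp

/-- The slice inclusion as a linear map. -/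
noncomputable def ptL (m p : ℕ) (w : Fin (m + 1) → ℝ) :
    ((Fin (p + 1) → ℝ) × ℝ) →L[ℝ] (Fin (m + 1) → ℝ) :=
  LinearMap.toContinuousLinearMap
  { toFun := fun z => pt m p w z.1 z.2
    map_add' := by
      intro a b; ext s; simp only [pt, injP, Pi.add_apply, Pi.smul_apply, Prod.fst_add,
        Prod.snd_add, smul_eq_mul]
      split_ifs <;> ring
    map_smul' := by
      intro a b; ext s; simp only [pt, injP, Pi.add_apply, Pi.smul_apply, Prod.smul_fst,
        Prod.smul_snd, smul_eq_mul, RingHom.id_apply]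
      split_ifs <;> ring }

theorem ptL_apply (m p : ℕ) (w : Fin (m + 1) → ℝ) (z : (Fin (p + 1) → ℝ) × ℝ) :
    ptL m p w z = pt m p w z.1 z.2 := rfl

theorem projP_pt {m p : ℕ} (hp : p < m) (w : Fin (m + 1) → ℝ)
    (hw : ∀ s : Fin (m + 1), (s : ℕ) ≤ p → w s = 0) (y : Fin (p + 1) → ℝ) (r : ℝ) :
    projP m p (pt m p w y r) = y := by
  ext s
  have h1 : (s : ℕ) < m + 1 := by omega
  have h2 : (s : ℕ) < p + 1 := s.2
  simp only [projP, pt, injP, h1, h2, dif_pos, Pi.add_apply, Pi.smul_apply,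
    hw ⟨s, h1⟩ (by simp only; omega), smul_zero, add_zero]

theorem rad_pt {m p : ℕ} (w : Fin (m + 1) → ℝ)
    (hw : ∀ s : Fin (m + 1), (s : ℕ) ≤ p → w s = 0) (hw1 : ∑ s, w s ^ 2 = 1)
    (y : Fin (p + 1) → ℝ) (r : ℝ) :
    rad m p (pt m p w y r) = |r| := by
  have : ∑ s, (xqpart m p (pt m p w y r) s) ^ 2 = r ^ 2 := by
    rw [← mul_one (r ^ 2), ← hw1, Finset.mul_sum]
    refine Finset.sum_congr rfl fun s _ => ?_
    by_cases hs : (s : ℕ) ≤ p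
    · simp [xqpart, hs, hw s hs]
    · have : ¬ (s : ℕ) < p + 1 := by omega
      simp [xqpart, hs, pt, injP, this]; ring
  rw [rad, this, Real.sqrt_sq_eq_abs]

theorem mem_Omega_iff {conj : A → A} (H : IsAltStarAlg A conj) {v : ℕ → A} {m p : ℕ}
    (hv : IsHypBasis A conj v m) (hp : p < m)
    (D : Set ((Fin (p + 1) → ℝ) × ℝ)) (hDrefl : ∀ z ∈ D, reflD p z ∈ D)
    (x : Fin (m + 1) → ℝ) :
    x ∈ OmegaD v m p D ↔ (projP m p x, rad m p x) ∈ D := by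
  constructor
  · rintro ⟨w, hw, z, hz, rfl⟩
    rw [mem_Sph H hv] at hw
    rw [projP_pt hp w hw.1, rad_pt w hw.1 hw.2]
    rcases abs_choice z.2 with h | h
    · rw [h]; exact hz
    · rw [h]; exact hDrefl z hz
  · intro hx
    have decomp : ∀ w : Fin (m + 1) → ℝ, xqpart m p x = rad m p x • w →
        x = pt m p w (projP m p x) (rad m p x) := by
      intro w hw
      ext s
      rw [pt, ← hw]
      by_cases hs : (s : ℕ) ≤ p
      · have h1 : (s : ℕ) < p + 1 := by omega
        have h2 : (s : ℕ) < m + 1 := s.2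
        simp only [injP, projP, xqpart, hs, h1, h2, dif_pos, if_pos, Pi.add_apply, add_zero]
      · have : ¬ (s : ℕ) < p + 1 := by omega
        simp [injP, xqpart, hs, this]
    have hsum : ∑ s, (xqpart m p x s) ^ 2 = rad m p x ^ 2 := by
      rw [rad, Real.sq_sqrt]; exact Finset.sum_nonneg fun _ _ => sq_nonneg _
    by_cases h0 : rad m p x = 0
    · refine ⟨Pi.single (Fin.last m) 1, ?_, _, hx, decomp _ ?_⟩
      · rw [mem_Sph H hv]
        constructor
        · intro s hs
          rw [Pi.single_apply, if_neg]; rintro rfl; simp at hs; omega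
        · simp [Pi.single_apply]
      · rw [h0, zero_smul]
        rw [h0] at hsum
        ext s
        have := (Finset.sum_eq_zero_iff_of_nonneg (fun _ _ => sq_nonneg _)).1
          (hsum.trans (by norm_num)) s (Finset.mem_univ s)
        simpa using this
    · refine ⟨normq m p x, ?_, _, hx, decomp _ ?_⟩
      · rw [mem_Sph H hv]
        constructor
        · intro s hs; simp [normq, xqpart, hs]
        · simp only [normq, Pi.smul_apply, smul_eq_mul, mul_pow]
          rw [← Finset.mul_sum, hsum]; field_simp
      · rw [normq, smul_smul, mul_inv_cancel₀ h0, one_smul]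

theorem isOpen_Omega {conj : A → A} (H : IsAltStarAlg A conj) {v : ℕ → A} {m p : ℕ}
    (hv : IsHypBasis A conj v m) (hp : p < m)
    (D : Set ((Fin (p + 1) → ℝ) × ℝ)) (hD : IsOpen D) (hDrefl : ∀ z ∈ D, reflD p z ∈ D) :
    IsOpen (OmegaD v m p D) := by
  have : OmegaD v m p D = (fun x => (projP m p x, rad m p x)) ⁻¹' D := by
    ext x; exact mem_Omega_iff H hv hp D hDrefl x
  rw [this]
  apply hD.preimage
  apply Continuous.prodMk
  · apply continuous_pi; intro s
    have h1 : (s : ℕ) < m + 1 := by omega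
    simp only [projP, h1, dif_pos]
    fun_prop
  · apply Real.continuous_sqrt.comp
    apply continuous_finsetSum; intro s _
    by_cases hs : (s : ℕ) ≤ p
    · simp only [xqpart, hs, if_true]; fun_prop
    · simp only [xqpart, hs, if_false]; fun_prop

/-- Left multiplication as a continuous linear map. -/
noncomputable def mulC {conj : A → A} (H : IsAltStarAlg A conj) (a : A) : A →L[ℝ] A :=
  haveI := H.finDim
  LinearMap.toContinuousLinearMap (mulB H a)

theorem mulC_apply {conj : A → A} (H : IsAltStarAlg A conj) (a b : A) :
    mulC H a b = a * b := rfl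

theorem slice_deriv {conj : A → A} (H : IsAltStarAlg A conj) {v : ℕ → A} {m p : ℕ}
    (D : Set ((Fin (p + 1) → ℝ) × ℝ)) (hD : IsOpen D)
    (F₁ F₂ : (Fin (p + 1) → ℝ) × ℝ → A)
    (hF₁ : ContDiffOn ℝ 1 F₁ D) (hF₂ : ContDiffOn ℝ 1 F₂ D)
    (f : (Fin (m + 1) → ℝ) → A) (hind : Induced v m p D F₁ F₂ f)
    (w : Fin (m + 1) → ℝ) (hw : w ∈ Sph v m p) (z : (Fin (p + 1) → ℝ) × ℝ) (hz : z ∈ D)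
    (hfd : DifferentiableAt ℝ f (pt m p w z.1 z.2)) (d : (Fin (p + 1) → ℝ) × ℝ) :
    fderiv ℝ f (pt m p w z.1 z.2) (pt m p w d.1 d.2) =
      fderiv ℝ F₁ z d + emb v m w * fderiv ℝ F₂ z d := by
  have h1 : HasFDerivAt F₁ (fderiv ℝ F₁ z) z :=
    ((hF₁.differentiableOn one_ne_zero).differentiableAt (hD.mem_nhds hz)).hasFDerivAt
  have h2 : HasFDerivAt F₂ (fderiv ℝ F₂ z) z :=
    ((hF₂.differentiableOn one_ne_zero).differentiableAt (hD.mem_nhds hz)).hasFDerivAt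
  have h3 : HasFDerivAt (fun z => F₁ z + mulC H (emb v m w) (F₂ z))
      (fderiv ℝ F₁ z + (mulC H (emb v m w)).comp (fderiv ℝ F₂ z)) z :=
    h1.add ((mulC H (emb v m w)).hasFDerivAt.comp z h2)
  have h4 : HasFDerivAt (fun z => f (ptL m p w z))
      ((fderiv ℝ f (ptL m p w z)).comp (ptL m p w)) z :=
    HasFDerivAt.comp z (g := f) hfd.hasFDerivAt (ptL m p w).hasFDerivAt
  have h5 : HasFDerivAt (fun z => F₁ z + mulC H (emb v m w) (F₂ z))
      ((fderiv ℝ f (ptL m p w z)).comp (ptL m p w)) z := by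
    refine h4.congr_of_eventuallyEq ?_
    filter_upwards [hD.mem_nhds hz] with y hy
    exact (hind w hw y hy).symm
  exact congrArg (fun L => L d) (h5.unique h3)

theorem tang_deriv {conj : A → A} (H : IsAltStarAlg A conj) {v : ℕ → A} {m p : ℕ}
    (hv : IsHypBasis A conj v m) (D : Set ((Fin (p + 1) → ℝ) × ℝ))
    (F₁ F₂ : (Fin (p + 1) → ℝ) × ℝ → A)
    (f : (Fin (m + 1) → ℝ) → A) (hind : Induced v m p D F₁ F₂ f)
    (w : Fin (m + 1) → ℝ) (hw : w ∈ Sph v m p) (z : (Fin (p + 1) → ℝ) × ℝ) (hz : z ∈ D)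
    (hfd : DifferentiableAt ℝ f (pt m p w z.1 z.2))
    (u : Fin (m + 1) → ℝ) (hu : u ∈ Sph v m p) (huw : ∑ s, w s * u s = 0) :
    z.2 • fderiv ℝ f (pt m p w z.1 z.2) u = emb v m u * F₂ z := by
  rw [mem_Sph H hv] at hw hu
  let c : ℝ → Fin (m + 1) → ℝ := fun t =>
    injP m p z.1 + z.2 • (Real.cos t • w + Real.sin t • u)
  have hc0 : c 0 = pt m p w z.1 z.2 := by simp [c, pt]
  have hc : HasDerivAt c (z.2 • u) 0 := by
    have h1 : HasDerivAt (fun t : ℝ => Real.cos t • w + Real.sin t • u)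
        ((-Real.sin 0) • w + (Real.cos 0) • u) 0 :=
      ((Real.hasDerivAt_cos 0).smul_const w).add ((Real.hasDerivAt_sin 0).smul_const u)
    have h2 : HasDerivAt c (z.2 • ((-Real.sin 0) • w + (Real.cos 0) • u)) 0 :=
      (h1.const_smul z.2).const_add (injP m p z.1)
    rw [Real.sin_zero, Real.cos_zero, neg_zero, zero_smul, one_smul, zero_add] at h2
    exact h2
  have hfc : HasDerivAt (fun t => f (c t)) (fderiv ℝ f (pt m p w z.1 z.2) (z.2 • u)) 0 := by
    rw [← hc0] at hfd ⊢
    exact hfd.hasFDerivAt.comp_hasDerivAt 0 hc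
  have hval : ∀ t, f (c t) = F₁ z + (Real.cos t • (emb v m w * F₂ z) +
      Real.sin t • (emb v m u * F₂ z)) := by
    intro t
    have hmem : (Real.cos t • w + Real.sin t • u) ∈ Sph v m p := by
      rw [mem_Sph H hv]
      constructor
      · intro s hs; simp [hw.1 s hs, hu.1 s hs]
      · have : ∀ s, (Real.cos t • w + Real.sin t • u) s ^ 2 =
          Real.cos t ^ 2 * w s ^ 2 + 2 * Real.cos t * Real.sin t * (w s * u s) +
            Real.sin t ^ 2 * u s ^ 2 := by
          intro s; simp; ring
        simp only [this, Finset.sum_add_distrib, ← Finset.mul_sum, hw.2, hu.2, huw]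
        simp
    have := hind _ hmem z hz
    rw [← embL_apply, map_add, map_smul, map_smul, embL_apply, embL_apply, H.add_mul',
      H.smul_mul', H.smul_mul'] at this
    exact this
  have hg : HasDerivAt (fun t => f (c t)) (emb v m u * F₂ z) 0 := by
    simp only [hval]
    have h1 : HasDerivAt (fun t : ℝ => Real.cos t • (emb v m w * F₂ z) +
        Real.sin t • (emb v m u * F₂ z))
        ((-Real.sin 0) • (emb v m w * F₂ z) + (Real.cos 0) • (emb v m u * F₂ z)) 0 :=
      ((Real.hasDerivAt_cos 0).smul_const _).add ((Real.hasDerivAt_sin 0).smul_const _)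
    have h2 := h1.const_add (F₁ z)
    simpa using h2
  rw [← map_smul]
  exact hfc.unique hg

theorem tang_deriv' {conj : A → A} (H : IsAltStarAlg A conj) {v : ℕ → A} {m p : ℕ}
    (hv : IsHypBasis A conj v m) (D : Set ((Fin (p + 1) → ℝ) × ℝ))
    (F₁ F₂ : (Fin (p + 1) → ℝ) × ℝ → A)
    (f : (Fin (m + 1) → ℝ) → A) (hind : Induced v m p D F₁ F₂ f)
    (w : Fin (m + 1) → ℝ) (hw : w ∈ Sph v m p) (z : (Fin (p + 1) → ℝ) × ℝ) (hz : z ∈ D)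
    (hfd : DifferentiableAt ℝ f (pt m p w z.1 z.2))
    (u : Fin (m + 1) → ℝ) (hu : ∀ s : Fin (m + 1), (s : ℕ) ≤ p → u s = 0)
    (huw : ∑ s, w s * u s = 0) :
    z.2 • fderiv ℝ f (pt m p w z.1 z.2) u = emb v m u * F₂ z := by
  have hnn : 0 ≤ ∑ s, u s ^ 2 := Finset.sum_nonneg fun _ _ => sq_nonneg _
  by_cases h0 : ∑ s, u s ^ 2 = 0
  · have : u = 0 := by
      ext s
      have := (Finset.sum_eq_zero_iff_of_nonneg (fun _ _ => sq_nonneg _)).1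
          h0 s (Finset.mem_univ s)
      simpa using this
    rw [this, ← embL_apply, ← mulB_apply H]; simp
  · set n := Real.sqrt (∑ s, u s ^ 2) with hn
    have hn2 : n ^ 2 = ∑ s, u s ^ 2 := Real.sq_sqrt hnn
    have hn0 : n ≠ 0 := by intro h; rw [h] at hn2; exact h0 (by rw [← hn2]; norm_num)
    have := tang_deriv H hv D F₁ F₂ f hind w hw z hz hfd (n⁻¹ • u) (by
      rw [mem_Sph H hv]
      constructor
      · intro s hs; simp [hu s hs]
      · simp only [Pi.smul_apply, smul_eq_mul, mul_pow]
        rw [← Finset.mul_sum, ← hn2]; field_simp) (by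
      have : ∀ s, w s * (n⁻¹ • u) s = n⁻¹ * (w s * u s) := by intro s; simp; ring
      simp only [this, ← Finset.mul_sum, huw, mul_zero])
    rw [← embL_apply, map_smul, map_smul, H.smul_mul', embL_apply, smul_comm] at this
    exact smul_right_injective A (inv_ne_zero hn0) this

theorem sum_low {m p : ℕ} (hp : p < m) (g : Fin (m + 1) → A) :
    (∑ s : Fin (m + 1), if (s : ℕ) ≤ p then g s else 0) =
      ∑ s : Fin (p + 1), g (Fin.castLE (by omega) s) := by
  rw [← Finset.sum_filter]
  symm
  refine Finset.sum_bij (fun s _ => Fin.castLE (by omega) s) ?_ ?_ ?_ ?_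
  · intro s _; simp; omega
  · intro a _ b _ h; simpa using h
  · intro b hb
    simp at hb
    exact ⟨⟨b, by omega⟩, Finset.mem_univ _, by ext; simp⟩
  · intro s _; rfl

theorem card_high {m p : ℕ} (hp : p < m) :
    (∑ s : Fin (m + 1), if (s : ℕ) ≤ p then (0 : ℝ) else 1) = ((m - p : ℕ) : ℝ) := by
  have h1 : (∑ s : Fin (m + 1), if (s : ℕ) ≤ p then (1 : ℝ) else 0) = p + 1 := by
    rw [sum_low hp (fun _ => (1 : ℝ))]; simp
  have h2 : (∑ s : Fin (m + 1), ((if (s : ℕ) ≤ p then (1 : ℝ) else 0) +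
      if (s : ℕ) ≤ p then (0 : ℝ) else 1)) = m + 1 := by
    rw [Finset.sum_congr rfl (g := fun _ => (1 : ℝ))]
    · simp
    · intro s _; split_ifs <;> simp
  rw [Finset.sum_add_distrib, h1] at h2
  rw [Nat.cast_sub hp.le]; linarith

theorem Dop_formula {conj : A → A} (H : IsAltStarAlg A conj) {v : ℕ → A} {m p : ℕ}
    (hv : IsHypBasis A conj v m) (hp : p < m) (D : Set ((Fin (p + 1) → ℝ) × ℝ)) (hD : IsOpen D)
    (F₁ F₂ : (Fin (p + 1) → ℝ) × ℝ → A)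
    (hF₁ : ContDiffOn ℝ 1 F₁ D) (hF₂ : ContDiffOn ℝ 1 F₂ D)
    (f : (Fin (m + 1) → ℝ) → A) (hind : Induced v m p D F₁ F₂ f)
    (w : Fin (m + 1) → ℝ) (hw : w ∈ Sph v m p) (z : (Fin (p + 1) → ℝ) × ℝ) (hz : z ∈ D)
    (hfd : DifferentiableAt ℝ f (pt m p w z.1 z.2)) (hr : z.2 ≠ 0) :
    Dop v m 0 m f (pt m p w z.1 z.2) =
      (DopSx v p F₁ z - pdSr p F₂ z - (((((m - p : ℕ) : ℝ)) - 1) / z.2) • F₂ z) +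
      emb v m w * (DbaropSx v p F₂ z + pdSr p F₁ z) := by
  have hw' := (mem_Sph H hv w).1 hw
  have hww : emb v m w * emb v m w = -1 := hw.2
  have hneg : ∀ a : A, (-1 : A) * a = -a := by
    intro a
    have := H.smul_mul' (-1) 1 a
    simpa [H.one_mul'] using this
  have hsq : ∀ a : A, emb v m w * (emb v m w * a) = -a := by
    intro a; rw [H.alt_left, hww, hneg]
  have hslice := slice_deriv H D hD F₁ F₂ hF₁ hF₂ f hind w hw z hz hfd
  have htang := tang_deriv' H hv D F₁ F₂ f hind w hw z hz hfd
  set x := pt m p w z.1 z.2 with hx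
  -- low directions
  have hlow : ∀ s : Fin (p + 1), pdF m (Fin.castLE (by omega) s) f x =
      pdSx p s F₁ z + emb v m w * pdSx p s F₂ z := by
    intro s
    rw [pdSx, pdSx, ← hslice, pdF]
    congr 1
    ext t
    simp only [pt, injP, Pi.single_apply, zero_smul, add_zero]
    by_cases ht : (t : ℕ) < p + 1
    · simp [ht, Fin.ext_iff]
    · have : (t : ℕ) ≠ s := by omega
      simp [ht, Fin.ext_iff, this]
  have hrad : fderiv ℝ f x w = pdSr p F₁ z + emb v m w * pdSr p F₂ z := by
    rw [pdSr, pdSr, ← hslice]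
    congr 1
    ext t
    simp [pt, injP]
  have hhigh : ∀ s : Fin (m + 1), ¬ (s : ℕ) ≤ p → pdF m s f x =
      w s • (pdSr p F₁ z + emb v m w * pdSr p F₂ z) +
        z.2⁻¹ • (v s * F₂ z - w s • (emb v m w * F₂ z)) := by
    intro s hs
    have h1 := htang (Pi.single s 1 - w s • w) (by
      intro t ht
      have : t ≠ s := by rintro rfl; exact hs ht
      simp [this, hw'.1 t ht]) (by
      have : ∀ t, w t * (Pi.single s 1 - w s • w : Fin (m + 1) → ℝ) t =
          w t * (Pi.single s 1 : Fin (m + 1) → ℝ) t - w s * w t ^ 2 := by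
        intro t; simp; ring
      simp only [this, Finset.sum_sub_distrib, ← Finset.mul_sum, hw'.2]
      simp [Pi.single_apply])
    have h2 : emb v m (Pi.single s 1) = v s := by
      simp [emb, Pi.single_apply]
    rw [← embL_apply, map_sub, map_smul, map_sub, map_smul, embL_apply, embL_apply, h2, hrad,
      ← mulB_apply H (_ - _), map_sub, map_smul, LinearMap.sub_apply, LinearMap.smul_apply,
      mulB_apply, mulB_apply] at h1
    rw [← h1, smul_smul, inv_mul_cancel₀ hr, one_smul, pdF]
    abel
  have hsplit : Dop v m 0 m f x =
      (∑ s : Fin (p + 1), v (s : ℕ) * pdF m (Fin.castLE (by omega) s) f x) +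
      ∑ s : Fin (m + 1), if (s : ℕ) ≤ p then 0 else v (s : ℕ) * pdF m s f x := by
    have := sum_low hp (fun s : Fin (m + 1) => v (s : ℕ) * pdF m s f x)
    simp only [Fin.val_castLE] at this
    rw [← this, ← Finset.sum_add_distrib, Dop]
    refine Finset.sum_congr rfl fun s _ => ?_
    rw [if_pos ⟨Nat.zero_le _, by omega⟩]
    split_ifs <;> simp
  have hL : (∑ s : Fin (p + 1), v (s : ℕ) * pdF m (Fin.castLE (by omega) s) f x) =
      DopSx v p F₁ z + emb v m w * DbaropSx v p F₂ z := by
    have h0 : emb v m w * DbaropSx v p F₂ z =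
        ∑ s : Fin (p + 1), v (s : ℕ) * (emb v m w * pdSx p s F₂ z) := by
      rw [DbaropSx, Fin.sum_univ_succ, Fin.sum_univ_succ, ← mulB_apply H]
      simp only [map_sub, map_add, map_sum]
      simp only [Fin.val_zero, Fin.val_succ, hv.v_zero, H.one_mul', mulB_apply]
      rw [if_neg (by norm_num), ← mulB_apply H _ 0, map_zero, zero_add, sub_eq_add_neg,
        ← Finset.sum_neg_distrib]
      congr 1
      refine Finset.sum_congr rfl fun s _ => ?_
      rw [if_pos (by omega)]
      have h1 := lin_alt H (v (s + 1)) (emb v m w) (pdSx p s.succ F₂ z)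
      rw [anti_v_emb H hv (s + 1) (by omega) (by omega) hp w hw'.1, ← mulB_apply H 0,
        map_zero, LinearMap.zero_apply] at h1
      exact (eq_neg_of_add_eq_zero_left h1).symm
    rw [h0, DopSx, ← Finset.sum_add_distrib]
    refine Finset.sum_congr rfl fun s _ => ?_
    rw [hlow, H.mul_add']
  have hsumw : ∀ a : A, (∑ s : Fin (m + 1), w s • (v (s : ℕ) * a)) = emb v m w * a := by
    intro a
    rw [← mulB_apply H, emb, map_sum, LinearMap.sum_apply]
    simp [mulB_apply]
  have hR : (∑ s : Fin (m + 1), if (s : ℕ) ≤ p then 0 else v (s : ℕ) * pdF m s f x) =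
      emb v m w * (pdSr p F₁ z + emb v m w * pdSr p F₂ z) +
        z.2⁻¹ • ((-((m - p : ℕ) : ℝ)) • F₂ z - emb v m w * (emb v m w * F₂ z)) := by
    rw [← hsumw, ← hsumw (emb v m w * F₂ z), ← card_high hp, ← Finset.sum_neg_distrib,
      Finset.sum_smul, ← Finset.sum_sub_distrib, Finset.smul_sum, ← Finset.sum_add_distrib]
    refine Finset.sum_congr rfl fun s _ => ?_
    by_cases hs : (s : ℕ) ≤ p
    · simp [hs, hw'.1 s hs]
    · rw [if_neg hs, if_neg hs, hhigh s hs, H.mul_add', H.mul_smul', H.mul_smul', ← mulB_apply H _ (_ - _),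
        map_sub, map_smul, mulB_apply, mulB_apply, H.alt_left,
        vsq H hv s (by omega) (by omega), hneg, neg_one_smul]
  rw [hsplit, hL, hR, H.mul_add', H.mul_add', hsq, hsq]
  have : (z.2⁻¹ • ((-((m - p : ℕ) : ℝ)) • F₂ z - -F₂ z)) =
      - ((((m - p : ℕ) : ℝ) - 1) / z.2) • F₂ z := by
    rw [sub_neg_eq_add]
    nth_rewrite 2 [← one_smul ℝ (F₂ z)]
    rw [← add_smul, smul_smul]
    congr 1; field_simp; ring
  rw [this, neg_smul]
  abel

/-- **Vekua-type characterization of monogenicity.** A generalized partial-slice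
function `f = F₁ + ωF₂ ∈ GS¹(Ω_D) ∩ C¹(Ω_D, 𝔸)` is left monogenic on `Ω_D` if and
only if for all `x' ∈ D ∖ ℝ^{p+1}`:
`D_{x_p}F₁ - ∂_r F₂ = ((q-1)/r) F₂` and `D̄_{x_p}F₂ + ∂_r F₁ = 0`. -/
theorem vekua_characterization
    {A : Type*} [NormedAddCommGroup A] [NormedSpace ℝ A] [Mul A] [One A]
    (conj : A → A) (H : IsAltStarAlg A conj)
    (v : ℕ → A) (m p : ℕ) (hv : IsHypBasis A conj v m) (hp : p < m)
    (D : Set ((Fin (p + 1) → ℝ) × ℝ)) (hD : IsOpen D) (hDconn : IsConnected D)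
    (hDrefl : ∀ z ∈ D, reflD p z ∈ D)
    (F₁ F₂ : (Fin (p + 1) → ℝ) × ℝ → A) (hstem : IsStem p D F₁ F₂)
    (hF₁ : ContDiffOn ℝ 1 F₁ D) (hF₂ : ContDiffOn ℝ 1 F₂ D)
    (f : (Fin (m + 1) → ℝ) → A) (hind : Induced v m p D F₁ F₂ f)
    (hf : ContDiffOn ℝ 1 f (OmegaD v m p D)) :
    (∀ x ∈ OmegaD v m p D, Dop v m 0 m f x = 0) ↔
      (∀ z ∈ D, z.2 ≠ 0 →
        DopSx v p F₁ z - pdSr p F₂ z =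
          (((((m - p : ℕ) : ℝ)) - 1) / z.2) • F₂ z ∧
        DbaropSx v p F₂ z + pdSr p F₁ z = 0) := by
  have hOm := isOpen_Omega H hv hp D hD hDrefl
  have hdiff : ∀ w ∈ Sph v m p, ∀ z ∈ D, DifferentiableAt ℝ f (pt m p w z.1 z.2) := by
    intro w hw z hz
    exact (hf.differentiableOn one_ne_zero).differentiableAt
      (hOm.mem_nhds ⟨w, hw, z, hz, rfl⟩)
  constructor
  · intro h z hz hr
    have hw : (Pi.single (Fin.last m) 1 : Fin (m + 1) → ℝ) ∈ Sph v m p := by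
      rw [mem_Sph H hv]
      constructor
      · intro s hs
        rw [Pi.single_apply, if_neg]; rintro rfl; simp at hs; omega
      · simp [Pi.single_apply]
    generalize (Pi.single (Fin.last m) 1 : Fin (m + 1) → ℝ) = w at hw
    have hw2 : -w ∈ Sph v m p := by
      rw [mem_Sph H hv] at hw ⊢
      constructor
      · intro s hs; simp [hw.1 s hs]
      · simpa using hw.2
    have e1 := Dop_formula H hv hp D hD F₁ F₂ hF₁ hF₂ f hind w hw z hz (hdiff w hw z hz) hr
    have e2 := Dop_formula H hv hp D hD F₁ F₂ hF₁ hF₂ f hind (-w) hw2 z hz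
      (hdiff (-w) hw2 z hz) hr
    rw [h _ ⟨w, hw, z, hz, rfl⟩] at e1
    rw [h _ ⟨-w, hw2, z, hz, rfl⟩, ← embL_apply, map_neg, ← mulB_apply H, map_neg,
      LinearMap.neg_apply, mulB_apply, embL_apply] at e2
    generalize hE1 : (DopSx v p F₁ z - pdSr p F₂ z -
      (((((m - p : ℕ) : ℝ)) - 1) / z.2) • F₂ z) = E1 at e1 e2
    generalize DbaropSx v p F₂ z + pdSr p F₁ z = E2 at e1 e2
    have hE1z : E1 = 0 := by
      have : (2 : ℝ) • E1 = 0 := by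
        rw [two_smul]
        calc E1 + E1 = (E1 + emb v m w * E2) + (E1 + -(emb v m w * E2)) := by abel
          _ = 0 := by rw [← e1, ← e2, add_zero]
      simpa using this
    rw [hE1z, zero_add] at e1
    have hE2z : E2 = 0 := by
      have h3 : emb v m w * (emb v m w * E2) = 0 := by
        rw [← e1, ← mulB_apply H, map_zero]
      rw [H.alt_left, hw.2] at h3
      have := H.smul_mul' (-1) 1 E2
      simp only [neg_one_smul, H.one_mul', h3] at this
      simpa using this.symm
    exact ⟨sub_eq_zero.1 (hE1.trans hE1z), hE2z⟩
  · intro h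
    have hne : ∀ w ∈ Sph v m p, ∀ z ∈ D, z.2 ≠ 0 → Dop v m 0 m f (pt m p w z.1 z.2) = 0 := by
      intro w hw z hz hr
      rw [Dop_formula H hv hp D hD F₁ F₂ hF₁ hF₂ f hind w hw z hz (hdiff w hw z hz) hr,
        (h z hz hr).1, (h z hz hr).2, ← mulB_apply H, map_zero]
      simp
    rintro x ⟨w, hw, z, hz, rfl⟩
    by_cases hr : z.2 = 0
    · have hcont : ContinuousAt (Dop v m 0 m f) (pt m p w z.1 z.2) := by
        have h1 : ContinuousAt (fderiv ℝ f) (pt m p w z.1 z.2) :=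
          (hf.continuousOn_fderiv_of_isOpen hOm le_rfl).continuousAt
            (hOm.mem_nhds ⟨w, hw, z, hz, rfl⟩)
        unfold Dop
        apply tendsto_finsetSum
        intro s _
        rw [if_pos ⟨Nat.zero_le _, by omega⟩]
        simp only [if_pos (show 0 ≤ (s : ℕ) ∧ (s : ℕ) ≤ m from ⟨Nat.zero_le _, by omega⟩)]
        exact ((mulC H (v s)).continuous.continuousAt.comp
          (h1.clm_apply continuousAt_const) : _)
      have hcurve : ContinuousAt (fun t : ℝ => Dop v m 0 m f (pt m p w z.1 t)) z.2 := by
        refine ContinuousAt.comp (g := Dop v m 0 m f) hcont ?_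
        have : Continuous (fun t : ℝ => pt m p w z.1 t) := by unfold pt; fun_prop
        exact this.continuousAt
      have hev : ∀ᶠ t in 𝓝[≠] z.2, Dop v m 0 m f (pt m p w z.1 t) = 0 := by
        have hmem : ∀ᶠ t in 𝓝 z.2, (z.1, t) ∈ D := by
          have : Continuous (fun t : ℝ => (z.1, t)) := by fun_prop
          exact this.continuousAt.eventually (hD.mem_nhds hz)
        filter_upwards [hmem.filter_mono nhdsWithin_le_nhds, self_mem_nhdsWithin] with t ht ht'
        exact hne w hw (z.1, t) ht (by rw [← hr]; exact ht')
      have ht1 := hcurve.tendsto.mono_left (nhdsWithin_le_nhds (s := {z.2}ᶜ))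
      have ht2 : Tendsto (fun t : ℝ => Dop v m 0 m f (pt m p w z.1 t)) (𝓝[≠] z.2) (𝓝 0) :=
        tendsto_const_nhds.congr' (hev.mono fun t ht => ht.symm)
      exact tendsto_nhds_unique ht1 ht2
    · exact hne w hw z hz hr

end GPSM
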